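/- Let Λ be a τ-stable lattice with Λ = Λ^∨. Then every D ∈ ℳ(𝔽) with D ⊆ Λ satisfies D ⊂¹ Λ, and the assignment D ↦ D/pΛ is a bijection from the set {D ∈ ℳ(𝔽) : D ⊆ Λ} onto the set of 𝔽-subspaces U ⊆ V(Λ) with dim U = 3, U^⊥ ⊆ U, dim U/(U ∩ σ̄U) ≤ 1, and U^⊥ ⊆ U ∩ σ̄U. -/

import Mathlib

open Pointwise

noncomputable section

variable (p : ℕ) [Fact p.Prime] (𝔽 : Type) [Field 𝔽] [IsAlgClosed 𝔽] [CharP 𝔽 p]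

/-- The Witt ring `W(𝔽)`. -/
abbrev Wp := WittVector p 𝔽

/-- The fraction field `K` of `W(𝔽)`. -/
abbrev Kp := FractionRing (Wp p 𝔽)

/-- `N₀ = K⁴`. -/
abbrev N0 := Fin 4 → Kp p 𝔽

/-- The symplectic form on `N₀`. -/
def omegaForm (x y : N0 p 𝔽) : Kp p 𝔽 :=
  x 0 * y 3 - x 3 * y 0 + x 1 * y 2 - x 2 * y 1

/-- The dual lattice of a `W`-submodule of `N₀`. -/
def dualL (D : Submodule (Wp p 𝔽) (N0 p 𝔽)) : Submodule (Wp p 𝔽) (N0 p 𝔽) where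
  carrier := {x | ∀ d ∈ D, omegaForm p 𝔽 x d ∈ (algebraMap (Wp p 𝔽) (Kp p 𝔽)).range}
  zero_mem' := by
    intro d hd
    have : omegaForm p 𝔽 0 d = 0 := by simp [omegaForm]
    rw [this]; exact zero_mem _
  add_mem' := by
    intro x y hx hy d hd
    have : omegaForm p 𝔽 (x + y) d = omegaForm p 𝔽 x d + omegaForm p 𝔽 y d := by
      simp [omegaForm]; ring
    rw [this]; exact add_mem (hx d hd) (hy d hd)
  smul_mem' := by
    intro c x hx d hd
    have : omegaForm p 𝔽 (c • x) d
        = algebraMap (Wp p 𝔽) (Kp p 𝔽) c * omegaForm p 𝔽 x d := by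
      simp [omegaForm, Algebra.smul_def]; ring
    rw [this]; exact mul_mem ⟨c, rfl⟩ (hx d hd)

variable (σ : Kp p 𝔽 ≃+* Kp p 𝔽)

/-- The semilinear map `τ` on `N₀`, applying `σ` to each coordinate. -/
def tauFun (x : N0 p 𝔽) : N0 p 𝔽 := fun i => σ (x i)

/-- The lattice `τD` generated by the image of `D` under `τ`. -/
def tauL (D : Submodule (Wp p 𝔽) (N0 p 𝔽)) : Submodule (Wp p 𝔽) (N0 p 𝔽) :=
  Submodule.span (Wp p 𝔽) (tauFun p 𝔽 σ '' D)

/-- `D` is a lattice in `N₀`: finitely generated over `W` and spanning `N₀` over `K`. -/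
def IsLattice (D : Submodule (Wp p 𝔽) (N0 p 𝔽)) : Prop :=
  D.FG ∧ Submodule.span (Kp p 𝔽) (D : Set (N0 p 𝔽)) = ⊤

/-- The length of the `W`-module `B / A` (as the Krull dimension of its submodule
lattice). -/
def relLength (A B : Submodule (Wp p 𝔽) (N0 p 𝔽)) : WithBot ℕ∞ :=
  Order.krullDim (Submodule (Wp p 𝔽) (B ⧸ (A.comap B.subtype)))

/-- `A ⊂ᵈ B` : `A ⊆ B` with colength `d`. -/
def SubD (d : ℕ) (A B : Submodule (Wp p 𝔽) (N0 p 𝔽)) : Prop :=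
  A ≤ B ∧ relLength p 𝔽 A B = (d : WithBot ℕ∞)

/-- Membership in `ℳ(𝔽)`. -/
def memM (D : Submodule (Wp p 𝔽) (N0 p 𝔽)) : Prop :=
  IsLattice p 𝔽 D ∧
  SubD p 𝔽 2 ((p : Wp p 𝔽) • dualL p 𝔽 D) D ∧
  SubD p 𝔽 2 D (dualL p 𝔽 D) ∧
  SubD p 𝔽 2 ((p : Wp p 𝔽) • dualL p 𝔽 D) (tauL p 𝔽 σ D) ∧
  SubD p 𝔽 2 (tauL p 𝔽 σ D) (dualL p 𝔽 D) ∧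
  relLength p 𝔽 D (D ⊔ tauL p 𝔽 σ D) ≤ 1

/-- `σ` is the automorphism of `K` induced by the Witt-vector Frobenius. -/
def IsWittFrobenius : Prop :=
  ∀ w : Wp p 𝔽, σ (algebraMap (Wp p 𝔽) (Kp p 𝔽) w)
    = algebraMap (Wp p 𝔽) (Kp p 𝔽) (WittVector.frobeniusEquiv p 𝔽 w)


/-! ### Relative lengths -/

section GenericLength

variable {R M : Type*} [CommRing R] [AddCommGroup M] [Module R M]

/-- relative length as an `ℕ∞` -/
def lenX (A B : Submodule R M) : ℕ∞ := Module.length R (B ⧸ (A.comap B.subtype))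

/-- submodules of `B / A` are the submodules between `A` and `B` -/
def iccIso (A B : Submodule R M) (h : A ≤ B) :
    Submodule R (B ⧸ (A.comap B.subtype)) ≃o Set.Icc A B where
  toFun S := ⟨(S.comap (A.comap B.subtype).mkQ).map B.subtype, by
    constructor
    · intro x hx
      refine ⟨⟨x, h hx⟩, ?_, rfl⟩
      have : (A.comap B.subtype).mkQ ⟨x, h hx⟩ = 0 := by
        simpa using hx
      simp only [SetLike.mem_coe, Submodule.mem_comap, this, zero_mem]
    · exact Submodule.map_subtype_le _ _⟩
  invFun C := (C.1.comap B.subtype).map (A.comap B.subtype).mkQ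
  left_inv S := by
    simp only [Submodule.comap_map_eq_of_injective B.injective_subtype]
    exact Submodule.map_comap_eq_of_surjective (Submodule.mkQ_surjective _) _
  right_inv C := by
    apply Subtype.ext
    simp only [Submodule.comap_map_mkQ]
    rw [sup_eq_right.2 (Submodule.comap_mono C.2.1), Submodule.map_comap_subtype]
    exact inf_eq_right.2 C.2.2
  map_rel_iff' := by
    intro S T
    change (S.comap (A.comap B.subtype).mkQ).map B.subtype ≤
      (T.comap (A.comap B.subtype).mkQ).map B.subtype ↔ _
    rw [Submodule.map_le_map_iff_of_injective B.injective_subtype,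
      Submodule.comap_le_comap_iff_of_surjective (Submodule.mkQ_surjective _)]

lemma coe_lenX (A B : Submodule R M) (h : A ≤ B) :
    (lenX A B : WithBot ℕ∞) = Order.krullDim (Set.Icc A B) := by
  rw [lenX, Module.coe_length, Order.krullDim_eq_of_orderIso (iccIso A B h)]

lemma lenX_add {A B C : Submodule R M} (h1 : A ≤ B) (h2 : B ≤ C) :
    lenX A C = lenX A B + lenX B C := by
  let f : (B ⧸ (A.comap B.subtype)) →ₗ[R] (C ⧸ (A.comap C.subtype)) :=
    Submodule.mapQ _ _ (Submodule.inclusion h2) (by intro x hx; simpa using hx)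
  let g : (C ⧸ (A.comap C.subtype)) →ₗ[R] (C ⧸ (B.comap C.subtype)) :=
    Submodule.mapQ _ _ LinearMap.id (by intro x hx; exact h1 hx)
  refine Module.length_eq_add_of_exact f g ?_ ?_ ?_
  · rw [← LinearMap.ker_eq_bot, LinearMap.ker_eq_bot']
    intro x hx
    obtain ⟨x, rfl⟩ := Submodule.mkQ_surjective _ x
    simpa [f] using hx
  · intro x
    obtain ⟨x, rfl⟩ := Submodule.mkQ_surjective _ x
    exact ⟨Submodule.mkQ _ x, by simp [g]⟩
  · intro x
    obtain ⟨x, rfl⟩ := Submodule.mkQ_surjective _ x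
    constructor
    · intro hx
      have hx' : (x : M) ∈ B := by simpa [g] using hx
      refine ⟨Submodule.mkQ _ ⟨x, hx'⟩, ?_⟩
      simp only [f, Submodule.mkQ_apply, Submodule.mapQ_apply]
      rfl
    · rintro ⟨y, hy⟩
      obtain ⟨y, rfl⟩ := Submodule.mkQ_surjective _ y
      rw [← hy]
      simp [f, g]

lemma lenX_inf (A B : Submodule R M) : lenX (A ⊓ B) A = lenX B (A ⊔ B) := by
  have e := LinearMap.quotientInfEquivSupQuotient A B
  have := e.length_eq
  rw [lenX, lenX, ← this]
  congr!

lemma lenX_eq_of_iso {A B A' B' : Submodule R M} (h : A ≤ B) (h' : A' ≤ B')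
    (e : Set.Icc A B ≃o Set.Icc A' B') : lenX A B = lenX A' B' := by
  apply WithBot.coe_injective
  rw [coe_lenX _ _ h, coe_lenX _ _ h', Order.krullDim_eq_of_orderIso e]

lemma lenX_eq_of_antiiso {A B A' B' : Submodule R M} (h : A ≤ B) (h' : A' ≤ B')
    (e : Set.Icc A B ≃o (Set.Icc A' B')ᵒᵈ) : lenX A B = lenX A' B' := by
  apply WithBot.coe_injective
  rw [coe_lenX _ _ h, coe_lenX _ _ h', Order.krullDim_eq_of_orderIso e, Order.krullDim_orderDual]

/-- an order embedding-like map with image an interval preserves length -/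
lemma lenX_orderIso (e : Submodule R M ≃o Submodule R M) {A B : Submodule R M} (h : A ≤ B) :
    lenX (e A) (e B) = lenX A B := by
  symm
  refine lenX_eq_of_iso h (e.monotone h) ?_
  exact
    { toFun := fun C => ⟨e C.1, e.monotone C.2.1, e.monotone C.2.2⟩
      invFun := fun C => ⟨e.symm C.1, (e.le_symm_apply).2 C.2.1, (e.symm_apply_le).2 C.2.2⟩
      left_inv := fun C => by simp
      right_inv := fun C => by simp
      map_rel_iff' := by
        intro C D
        exact e.le_iff_le }

end GenericLength

lemma relLength_eq (A B : Submodule (Wp p 𝔽) (N0 p 𝔽)) :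
    relLength p 𝔽 A B = (lenX A B : WithBot ℕ∞) := by
  rw [relLength, lenX, Module.coe_length]

/-! ### Multiplication by `p` and `τ` as order isomorphisms -/

lemma p_ne_zero_K : algebraMap (Wp p 𝔽) (Kp p 𝔽) (p : Wp p 𝔽) ≠ 0 := by
  intro h
  have h0 : (p : Wp p 𝔽) ≠ 0 := WittVector.p_nonzero p 𝔽
  exact h0 ((IsFractionRing.injective (Wp p 𝔽) (Kp p 𝔽)) (by rw [h, map_zero]))

/-- multiplication by `p` -/
def pIso : Submodule (Wp p 𝔽) (N0 p 𝔽) ≃o Submodule (Wp p 𝔽) (N0 p 𝔽) :=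
  Submodule.orderIsoMapComapOfBijective
    (LinearMap.lsmul (Wp p 𝔽) (N0 p 𝔽) (p : Wp p 𝔽)) (by
      constructor
      · intro x y hxy
        funext i
        have := congrFun hxy i
        simp only [LinearMap.lsmul_apply, Pi.smul_apply, Algebra.smul_def] at this
        exact mul_left_cancel₀ (p_ne_zero_K p 𝔽) this
      · intro y
        refine ⟨fun i => (algebraMap (Wp p 𝔽) (Kp p 𝔽) (p : Wp p 𝔽))⁻¹ * y i, ?_⟩
        funext i
        simp only [LinearMap.lsmul_apply, Pi.smul_apply, Algebra.smul_def]
        rw [mul_inv_cancel_left₀ (p_ne_zero_K p 𝔽)])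

lemma pIso_apply (A : Submodule (Wp p 𝔽) (N0 p 𝔽)) : pIso p 𝔽 A = (p : Wp p 𝔽) • A := rfl

lemma tauIso_exists (hσ : IsWittFrobenius p 𝔽 σ) :
    ∃ e : Submodule (Wp p 𝔽) (N0 p 𝔽) ≃o Submodule (Wp p 𝔽) (N0 p 𝔽),
      ∀ A, e A = tauL p 𝔽 σ A := by
  let φ : Wp p 𝔽 ≃+* Wp p 𝔽 := WittVector.frobeniusEquiv p 𝔽
  haveI : RingHomSurjective (φ : Wp p 𝔽 →+* Wp p 𝔽) := ⟨φ.surjective⟩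
  let f : N0 p 𝔽 →ₛₗ[(φ : Wp p 𝔽 →+* Wp p 𝔽)] N0 p 𝔽 :=
    { toFun := tauFun p 𝔽 σ
      map_add' := by intro x y; funext i; simp [tauFun]
      map_smul' := by
        intro c x
        funext i
        simp only [tauFun, Pi.smul_apply, Algebra.smul_def, map_mul]
        rw [hσ c]
        rfl }
  have hf : Function.Bijective f := by
    constructor
    · intro x y hxy
      funext i
      exact σ.injective (congrFun hxy i)
    · intro y
      exact ⟨fun i => σ.symm (y i), by funext i; simp [f, tauFun]⟩
  refine ⟨Submodule.orderIsoMapComapOfBijective f hf, fun A => ?_⟩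
  apply le_antisymm
  · rintro _ ⟨x, hx, rfl⟩
    exact Submodule.subset_span ⟨x, hx, rfl⟩
  · refine Submodule.span_le.2 ?_
    rintro _ ⟨x, hx, rfl⟩
    exact ⟨x, hx, rfl⟩

/-! ### Duality -/

/-- the symplectic form as a bilinear form -/
def omegaB : LinearMap.BilinForm (Kp p 𝔽) (N0 p 𝔽) :=
  LinearMap.mk₂ (Kp p 𝔽) (omegaForm p 𝔽)
    (by intro x y z; simp [omegaForm]; ring)
    (by intro c x z; simp [omegaForm]; ring)
    (by intro x y z; simp [omegaForm]; ring)
    (by intro c x z; simp [omegaForm]; ring)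

lemma omegaB_apply (x y : N0 p 𝔽) : omegaB p 𝔽 x y = omegaForm p 𝔽 x y := rfl

lemma omega_swap (x y : N0 p 𝔽) : omegaForm p 𝔽 x y = - omegaForm p 𝔽 y x := by
  simp [omegaForm]; ring

lemma omegaB_nondeg : (omegaB p 𝔽).Nondegenerate := by
  have key : ∀ x : N0 p 𝔽, (∀ y, omegaForm p 𝔽 x y = 0) → x = 0 := by
    intro x hx
    have h0 := hx (Pi.single 3 1)
    have h1 := hx (Pi.single 2 1)
    have h2 := hx (Pi.single 1 1)
    have h3 := hx (Pi.single 0 1)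
    simp [omegaForm, Pi.single_apply] at h0 h1 h2 h3
    funext i
    fin_cases i <;> simp_all
  constructor
  · intro x hx
    exact key x hx
  · intro x hx
    refine key x fun y => ?_
    rw [omega_swap]
    have := hx y
    rw [omegaB_apply] at this
    rw [this, neg_zero]

lemma dualL_eq (D : Submodule (Wp p 𝔽) (N0 p 𝔽)) : dualL p 𝔽 D = (omegaB p 𝔽).dualSubmodule D := by
  ext x
  rw [LinearMap.BilinForm.mem_dualSubmodule]
  constructor
  · intro h d hd
    rw [Submodule.mem_one]
    exact h d hd
  · intro h d hd
    have := h d hd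
    rw [Submodule.mem_one] at this
    exact this

lemma dualL_eq' (D : Submodule (Wp p 𝔽) (N0 p 𝔽)) :
    dualL p 𝔽 D = (omegaB p 𝔽).flip.dualSubmodule D := by
  rw [dualL_eq]
  ext x
  simp only [LinearMap.BilinForm.mem_dualSubmodule, LinearMap.BilinForm.flip_apply, omegaB_apply]
  refine forall₂_congr fun y _ => ?_
  rw [omega_swap, neg_mem_iff]

lemma dual_anti {A B : Submodule (Wp p 𝔽) (N0 p 𝔽)} (h : A ≤ B) : dualL p 𝔽 B ≤ dualL p 𝔽 A :=
  fun _ hx d hd => hx d (h hd)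

lemma exists_basis {D : Submodule (Wp p 𝔽) (N0 p 𝔽)} (hD : IsLattice p 𝔽 D) :
    ∃ (n : ℕ) (b : Module.Basis (Fin n) (Kp p 𝔽) (N0 p 𝔽)),
      D = Submodule.span (Wp p 𝔽) (Set.range b) := by
  haveI : Submodule.IsLattice (Kp p 𝔽) D := ⟨hD.1, hD.2⟩
  haveI : Module.Free (Wp p 𝔽) D := Submodule.IsLattice.free (Kp p 𝔽) D
  let b := Module.finBasis (Wp p 𝔽) D
  refine ⟨_, b.extendOfIsLattice (Kp p 𝔽), ?_⟩
  have h1 : Set.range (b.extendOfIsLattice (Kp p 𝔽)) = D.subtype '' (Set.range b) := by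
    ext x
    simp [Module.Basis.extendOfIsLattice_apply]
  rw [h1, ← Submodule.map_span, b.span_eq, Submodule.map_top, Submodule.range_subtype]

lemma lattice_of_basis {n : ℕ} (b : Module.Basis (Fin n) (Kp p 𝔽) (N0 p 𝔽)) :
    IsLattice p 𝔽 (Submodule.span (Wp p 𝔽) (Set.range b)) := by
  refine ⟨Submodule.fg_span (Set.finite_range _), ?_⟩
  rw [Submodule.span_span_of_tower, b.span_eq]

lemma dual_lattice {D : Submodule (Wp p 𝔽) (N0 p 𝔽)} (hD : IsLattice p 𝔽 D) :
    IsLattice p 𝔽 (dualL p 𝔽 D) := by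
  obtain ⟨n, b, rfl⟩ := exists_basis p 𝔽 hD
  rw [dualL_eq, LinearMap.BilinForm.dualSubmodule_span_of_basis _ (omegaB_nondeg p 𝔽)]
  exact lattice_of_basis p 𝔽 _

lemma dual_dual {D : Submodule (Wp p 𝔽) (N0 p 𝔽)} (hD : IsLattice p 𝔽 D) :
    dualL p 𝔽 (dualL p 𝔽 D) = D := by
  obtain ⟨n, b, rfl⟩ := exists_basis p 𝔽 hD
  rw [dualL_eq, dualL_eq',
    LinearMap.BilinForm.dualSubmodule_dualSubmodule_flip_of_basis _ (omegaB_nondeg p 𝔽)]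

lemma lattice_between {A B C : Submodule (Wp p 𝔽) (N0 p 𝔽)} (hA : IsLattice p 𝔽 A)
    (hB : IsLattice p 𝔽 B) (h1 : A ≤ C) (h2 : C ≤ B) : IsLattice p 𝔽 C := by
  refine ⟨?_, eq_top_iff.2 (hA.2 ▸ Submodule.span_mono h1)⟩
  haveI : Module.Finite (Wp p 𝔽) B := Module.Finite.iff_fg.2 hB.1
  haveI : IsNoetherian (Wp p 𝔽) B := inferInstance
  haveI : IsNoetherian (Wp p 𝔽) C := isNoetherian_of_le h2
  exact Module.Finite.iff_fg.1 inferInstance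

lemma lenX_dual {A B : Submodule (Wp p 𝔽) (N0 p 𝔽)} (hA : IsLattice p 𝔽 A)
    (hB : IsLattice p 𝔽 B) (h : A ≤ B) :
    lenX (dualL p 𝔽 B) (dualL p 𝔽 A) = lenX A B := by
  symm
  refine lenX_eq_of_antiiso h (dual_anti p 𝔽 h) ?_
  have hA' := dual_lattice p 𝔽 hA
  have hB' := dual_lattice p 𝔽 hB
  exact
    { toFun := fun C => OrderDual.toDual
        ⟨dualL p 𝔽 C.1, dual_anti p 𝔽 C.2.2, dual_anti p 𝔽 C.2.1⟩
      invFun := fun C => ⟨dualL p 𝔽 (OrderDual.ofDual C).1,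
        (dual_dual p 𝔽 hA).symm.le.trans (dual_anti p 𝔽 (OrderDual.ofDual C).2.2),
        (dual_anti p 𝔽 (OrderDual.ofDual C).2.1).trans (dual_dual p 𝔽 hB).le⟩
      left_inv := fun C =>
        Subtype.ext (dual_dual p 𝔽 (lattice_between p 𝔽 hA hB C.2.1 C.2.2))
      right_inv := fun C =>
        Subtype.ext (dual_dual p 𝔽 (lattice_between p 𝔽 hB' hA' C.2.1 C.2.2))
      map_rel_iff' := by
        intro C D
        constructor
        · intro h'
          have h'' : dualL p 𝔽 D.1 ≤ dualL p 𝔽 C.1 := h'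
          have := dual_anti p 𝔽 h''
          rwa [dual_dual p 𝔽 (lattice_between p 𝔽 hA hB C.2.1 C.2.2),
            dual_dual p 𝔽 (lattice_between p 𝔽 hA hB D.2.1 D.2.2)] at this
        · intro h'
          exact dual_anti p 𝔽 (show C.1 ≤ D.1 from h') }

lemma p_smul_le (A : Submodule (Wp p 𝔽) (N0 p 𝔽)) : (p : Wp p 𝔽) • A ≤ A := by
  rintro _ ⟨x, hx, rfl⟩
  exact A.smul_mem _ hx

lemma lenX_p {D : Submodule (Wp p 𝔽) (N0 p 𝔽)} (hD : IsLattice p 𝔽 D) :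
    lenX ((p : Wp p 𝔽) • D) D = 4 := by
  haveI : Submodule.IsLattice (Kp p 𝔽) D := ⟨hD.1, hD.2⟩
  haveI : Module.Free (Wp p 𝔽) D := Submodule.IsLattice.free (Kp p 𝔽) D
  have hr : Module.finrank (Wp p 𝔽) D = 4 := Submodule.IsLattice.finrank_of_pi (Kp p 𝔽) D
  let b := Module.finBasisOfFinrankEq (Wp p 𝔽) D hr
  let I : Ideal (Wp p 𝔽) := Ideal.span {(p : Wp p 𝔽)}
  have hI : I.IsMaximal :=
    PrincipalIdealRing.isMaximal_of_irreducible (WittVector.irreducible p)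
  let f : D →ₗ[Wp p 𝔽] (Fin 4 → Wp p 𝔽 ⧸ I) :=
    (LinearMap.pi fun i => (Submodule.mkQ I) ∘ₗ (LinearMap.proj i)) ∘ₗ b.equivFun.toLinearMap
  have hfs : Function.Surjective f := by
    intro y
    choose z hz using fun i => Submodule.mkQ_surjective I (y i)
    refine ⟨b.equivFun.symm z, ?_⟩
    funext i
    simp only [f, LinearMap.comp_apply, LinearMap.pi_apply, LinearEquiv.coe_coe,
      LinearEquiv.apply_symm_apply, LinearMap.proj_apply]
    exact hz i
  have hker : LinearMap.ker f = ((p : Wp p 𝔽) • D).comap D.subtype := by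
    ext x
    have hx : x ∈ LinearMap.ker f ↔ ∀ i, b.equivFun x i ∈ I := by
      rw [LinearMap.mem_ker, funext_iff]
      refine forall_congr' fun i => ?_
      exact Submodule.Quotient.mk_eq_zero I
    rw [hx]
    constructor
    · intro h
      choose c hc using fun i => Ideal.mem_span_singleton'.1 (h i)
      refine ⟨(b.equivFun.symm c : D), (b.equivFun.symm c).2, ?_⟩
      have : (p : Wp p 𝔽) • b.equivFun.symm c = x := by
        apply b.equivFun.injective
        rw [map_smul, LinearEquiv.apply_symm_apply]
        funext i
        rw [← hc i, Pi.smul_apply, smul_eq_mul, mul_comm]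
      rw [← this]
      rfl
    · rintro ⟨y, hy, hyx⟩ i
      have : x = (p : Wp p 𝔽) • (⟨y, hy⟩ : D) := Subtype.ext hyx.symm
      rw [this, map_smul, Pi.smul_apply, smul_eq_mul]
      exact I.mul_mem_right _ (Ideal.mem_span_singleton_self _)
  have e := f.quotKerEquivOfSurjective hfs
  rw [lenX, ← hker, e.length_eq, Module.length_pi]
  haveI : IsSimpleModule (Wp p 𝔽) (Wp p 𝔽 ⧸ I) := (isSimpleModule_iff_isCoatom).2 hI.out
  rw [Module.length_eq_one]
  simp

lemma lenX_p_p {A B : Submodule (Wp p 𝔽) (N0 p 𝔽)} (h : A ≤ B) :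
    lenX ((p : Wp p 𝔽) • A) ((p : Wp p 𝔽) • B) = lenX A B :=
  lenX_orderIso (pIso p 𝔽) h

lemma p_mono {A B : Submodule (Wp p 𝔽) (N0 p 𝔽)} (h : A ≤ B) :
    (p : Wp p 𝔽) • A ≤ (p : Wp p 𝔽) • B :=
  (pIso p 𝔽).monotone h

lemma relLength_eq_natCast (A B : Submodule (Wp p 𝔽) (N0 p 𝔽)) (n : ℕ) :
    relLength p 𝔽 A B = (n : WithBot ℕ∞) ↔ lenX A B = (n : ℕ∞) := by
  rw [relLength_eq]
  exact WithBot.coe_inj (b := (n : ℕ∞))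

lemma relLength_le_one (A B : Submodule (Wp p 𝔽) (N0 p 𝔽)) :
    relLength p 𝔽 A B ≤ 1 ↔ lenX A B ≤ 1 := by
  rw [relLength_eq]
  exact WithBot.coe_le_coe (b := (1 : ℕ∞))

/-- exchanging the two sides of `D + τD` -/
lemma lenX_exchange {P D T : Submodule (Wp p 𝔽) (N0 p 𝔽)} (h1 : P ≤ D) (h2 : P ≤ T)
    (hD : lenX P D = 2) (hT : lenX P T = 2) : lenX D (D ⊔ T) = lenX (D ⊓ T) D := by
  rw [lenX_inf]
  have e1 := lenX_add h1 (le_sup_left : D ≤ D ⊔ T)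
  have e2 := lenX_add h2 (le_sup_right : T ≤ D ⊔ T)
  rw [e1, hD, hT] at e2
  exact ENat.add_right_injective_of_ne_top (n := 2) (ENat.coe_ne_top 2) e2

lemma half_len {a : ℕ∞} (h : a + a = 2) : a = 1 := by
  cases a with
  | top => simp at h
  | coe n => norm_cast at h ⊢; omega

lemma cancel_len {a : ℕ∞} {k m : ℕ} (h : ((k + m : ℕ) : ℕ∞) = k + a) : a = m := by
  push_cast at h
  exact (ENat.add_right_injective_of_ne_top (ENat.coe_ne_top k) h).symm

lemma cancel_len' {a : ℕ∞} {k m : ℕ} (h : ((k + m : ℕ) : ℕ∞) = a + m) : a = k := by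
  push_cast at h
  exact (WithTop.add_right_cancel (ENat.coe_ne_top m) h).symm

/-- Let `Λ` be a `τ`-stable lattice with `Λ = Λ^∨`. Every `D ∈ ℳ(𝔽)`
with `D ⊆ Λ` satisfies `D ⊂¹ Λ`, and `D ↦ D/pΛ` is a bijection from
`{D ∈ ℳ(𝔽) : D ⊆ Λ}` onto the set of `𝔽`-subspaces `U ⊆ V(Λ) = Λ/pΛ` with
`dim U = 3`, `U^⊥ ⊆ U`, `dim U/(U ∩ σ̄U) ≤ 1` and `U^⊥ ⊆ U ∩ σ̄U`.

Here subspaces of `V(Λ)` are encoded by their preimages, i.e. by `W`-submodules `U`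
with `pΛ ⊆ U ⊆ Λ`; `dim` becomes the `W`-length relative to `pΛ`, the orthogonal
complement `U^⊥ ⊆ V(Λ)` is induced by `p·(U^∨)`, and `σ̄U` is induced by `τU`.
Under this encoding `D ↦ D/pΛ` corresponds to `D ↦ D`, so bijectivity becomes an
equality of sets of submodules. -/
theorem stratum_type0_as_DL_variety
    (p : ℕ) [Fact p.Prime] (hp : Odd p)
    (𝔽 : Type) [Field 𝔽] [IsAlgClosed 𝔽] [CharP 𝔽 p]
    (σ : Kp p 𝔽 ≃+* Kp p 𝔽) (hσ : IsWittFrobenius p 𝔽 σ)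
    (Λ : Submodule (Wp p 𝔽) (N0 p 𝔽)) (hΛ : IsLattice p 𝔽 Λ)
    (hτΛ : tauL p 𝔽 σ Λ = Λ) (hself : Λ = dualL p 𝔽 Λ) :
    (∀ D : Submodule (Wp p 𝔽) (N0 p 𝔽), memM p 𝔽 σ D → D ≤ Λ → SubD p 𝔽 1 D Λ) ∧
    {D : Submodule (Wp p 𝔽) (N0 p 𝔽) | memM p 𝔽 σ D ∧ D ≤ Λ} =
      {U : Submodule (Wp p 𝔽) (N0 p 𝔽) |
        (p : Wp p 𝔽) • Λ ≤ U ∧ U ≤ Λ ∧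
        relLength p 𝔽 ((p : Wp p 𝔽) • Λ) U = (3 : WithBot ℕ∞) ∧
        (p : Wp p 𝔽) • dualL p 𝔽 U ≤ U ∧
        relLength p 𝔽 (U ⊓ tauL p 𝔽 σ U) U ≤ 1 ∧
        (p : Wp p 𝔽) • dualL p 𝔽 U ≤ U ⊓ tauL p 𝔽 σ U} := by
  have forward : ∀ D : Submodule (Wp p 𝔽) (N0 p 𝔽), memM p 𝔽 σ D → D ≤ Λ →
      lenX D Λ = 1 ∧ lenX Λ (dualL p 𝔽 D) = 1 ∧ Λ ≤ dualL p 𝔽 D := by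
    intro D hD hDΛ
    have hle : Λ ≤ dualL p 𝔽 D := hself.le.trans (dual_anti p 𝔽 hDΛ)
    have e1 : lenX Λ (dualL p 𝔽 D) = lenX D Λ := by
      have := lenX_dual p 𝔽 hD.1 hΛ hDΛ
      rwa [← hself] at this
    have e2 := lenX_add hDΛ hle
    have e3 : lenX D (dualL p 𝔽 D) = 2 := (relLength_eq_natCast p 𝔽 _ _ 2).1 hD.2.2.1.2
    rw [e1, e3] at e2
    have := half_len e2.symm
    exact ⟨this, e1.trans this, hle⟩
  refine ⟨fun D hD hDΛ =>
    ⟨hDΛ, (relLength_eq_natCast p 𝔽 _ _ 1).2 (by simpa using (forward D hD hDΛ).1)⟩, ?_⟩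
  ext D
  constructor
  · rintro ⟨hD, hDΛ⟩
    obtain ⟨f1, f2, f3⟩ := forward D hD hDΛ
    obtain ⟨hL, ⟨a1, a2⟩, ⟨b1, b2⟩, ⟨c1, c2⟩, ⟨d1, d2⟩, e⟩ := hD
    have a2' : lenX _ _ = 2 := (relLength_eq_natCast p 𝔽 _ _ 2).1 a2
    have c2' : lenX _ _ = 2 := (relLength_eq_natCast p 𝔽 _ _ 2).1 c2
    refine ⟨(p_mono p 𝔽 f3).trans a1, hDΛ, ?_, a1, ?_, le_inf a1 c1⟩
    · refine (relLength_eq_natCast p 𝔽 _ _ 3).2 ?_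
      rw [lenX_add (p_mono p 𝔽 f3) a1, lenX_p_p p 𝔽 f3, f2, a2']
      norm_num
    · rw [relLength_le_one] at e ⊢
      rwa [← lenX_exchange p 𝔽 a1 c1 a2' c2']
  · rintro ⟨h1, h2, h3, h4, h5, h6⟩
    have h3' : lenX _ _ = ((3 : ℕ) : ℕ∞) := (relLength_eq_natCast p 𝔽 _ _ 3).1 h3
    have hpΛ : IsLattice p 𝔽 ((p : Wp p 𝔽) • Λ) := by
      obtain ⟨hfg, hsp⟩ := hΛ
      refine ⟨hfg.map _, ?_⟩
      rw [eq_top_iff, ← hsp]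
      refine Submodule.span_le.2 fun x hx => ?_
      have hpx : (p : Wp p 𝔽) • x ∈ Submodule.span (Kp p 𝔽)
          (((p : Wp p 𝔽) • Λ : Submodule (Wp p 𝔽) (N0 p 𝔽)) : Set (N0 p 𝔽)) :=
        Submodule.subset_span ⟨x, hx, rfl⟩
      have := Submodule.smul_mem _ (algebraMap (Wp p 𝔽) (Kp p 𝔽) (p : Wp p 𝔽))⁻¹ hpx
      rwa [← algebraMap_smul (Kp p 𝔽) (p : Wp p 𝔽) x, smul_smul,
        inv_mul_cancel₀ (p_ne_zero_K p 𝔽), one_smul] at this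
    have hL : IsLattice p 𝔽 D := lattice_between p 𝔽 hpΛ hΛ h1 h2
    have hle : Λ ≤ dualL p 𝔽 D := hself.le.trans (dual_anti p 𝔽 h2)
    have e1 : lenX Λ (dualL p 𝔽 D) = lenX D Λ := by
      have := lenX_dual p 𝔽 hL hΛ h2
      rwa [← hself] at this
    have e2 : lenX D Λ = ((1 : ℕ) : ℕ∞) := by
      have := lenX_add h1 h2
      rw [lenX_p p 𝔽 hΛ, h3'] at this
      exact cancel_len this
    rw [e2] at e1
    have e3 : lenX ((p : Wp p 𝔽) • dualL p 𝔽 D) D = ((2 : ℕ) : ℕ∞) := by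
      have := lenX_add (p_mono p 𝔽 hle) h4
      rw [h3', lenX_p_p p 𝔽 hle, e1] at this
      exact cancel_len this
    obtain ⟨t, ht⟩ := tauIso_exists p 𝔽 σ hσ
    have hτle : tauL p 𝔽 σ D ≤ Λ := by
      rw [← hτΛ, ← ht, ← ht]
      exact t.monotone h2
    have e4 : lenX (tauL p 𝔽 σ D) Λ = ((1 : ℕ) : ℕ∞) := by
      have := lenX_orderIso t h2
      rwa [ht, ht, hτΛ, e2] at this
    have h7 : (p : Wp p 𝔽) • dualL p 𝔽 D ≤ tauL p 𝔽 σ D := h6.trans inf_le_right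
    have e5 : lenX D (dualL p 𝔽 D) = ((2 : ℕ) : ℕ∞) := by
      rw [lenX_add h2 hle, e1, e2]; norm_num
    have e6 : lenX (tauL p 𝔽 σ D) (dualL p 𝔽 D) = ((2 : ℕ) : ℕ∞) := by
      rw [lenX_add hτle hle, e1, e4]; norm_num
    have e7 : lenX ((p : Wp p 𝔽) • dualL p 𝔽 D) (tauL p 𝔽 σ D) = ((2 : ℕ) : ℕ∞) := by
      have := lenX_add h7 (hτle.trans hle)
      rw [lenX_p p 𝔽 (dual_lattice p 𝔽 hL), e6] at this
      exact cancel_len' (k := 2) (m := 2) this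
    refine ⟨⟨hL, ⟨h4, (relLength_eq_natCast p 𝔽 _ _ 2).2 e3⟩,
      ⟨h2.trans hle, (relLength_eq_natCast p 𝔽 _ _ 2).2 e5⟩,
      ⟨h7, (relLength_eq_natCast p 𝔽 _ _ 2).2 e7⟩,
      ⟨hτle.trans hle, (relLength_eq_natCast p 𝔽 _ _ 2).2 e6⟩, ?_⟩, h2⟩
    rw [relLength_le_one] at h5 ⊢
    rwa [lenX_exchange p 𝔽 h4 h7 e3 e7]

end
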